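/- Let α be a type and let A, B be lists over α, both of length 2. Let i ≥ 2 be an integer, q ≥ 3 odd, k = 2^{i−1}·q, and m = (q+1)/2. Set L = d(k/2) and R = L + (|S(a(m−1))| + (i−1)·|S(m)|)/2. Then R > |S(a(m−1))|, where S = S_{A,B} and d is Stern's diatomic sequence. -/

import Mathlib

/-- Stern's diatomic sequence. -/
def stern : ℕ → ℕ
  | 0 => 0
  | 1 => 1
  | n + 2 =>
    if (n + 2) % 2 = 0 then stern ((n + 2) / 2)
    else stern ((n + 2) / 2) + stern ((n + 2) / 2 + 1)
decreasing_by all_goals omega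

/-- OEIS A003602: a(1)=1, a(2n)=a(n), a(2n+1)=n+1. (a(0)=0 as junk value.) -/
def aseq : ℕ → ℕ
  | 0 => 0
  | 1 => 1
  | n + 2 =>
    if (n + 2) % 2 = 0 then aseq ((n + 2) / 2)
    else (n + 2) / 2 + 1
decreasing_by all_goals omega

-- the modified sequence `a*`: zero at powers of two.
open Classical in
noncomputable def aStar (j : ℕ) : ℕ :=
  if ∃ k, j = 2 ^ k then 0 else aseq j

theorem aseq_le (n : ℕ) : aseq n ≤ n := by
  induction n using Nat.strong_induction_on with
  | _ n ih =>
    match n with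
    | 0 => simp [aseq]
    | 1 => simp [aseq]
    | m + 2 =>
      rw [aseq]
      split
      · exact le_trans (ih ((m + 2) / 2) (by omega)) (by omega)
      · omega

theorem aStar_le (j : ℕ) : aStar j ≤ j := by
  unfold aStar
  split
  · omega
  · exact aseq_le j

/-- The Markov-type sequence `S_{A,B}(n)`. -/
noncomputable def mseq {α : Type*} (A B : List α) : ℕ → List α
  | 0 => A
  | 1 => B
  | 2 => A ++ B
  | n + 3 =>
    if (n + 3) % 2 = 0 then
      mseq A B ((n + 3) / 2) ++ mseq A B (aseq ((n + 3) / 2))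
    else
      mseq A B (aStar ((n + 4) / 2 - 1)) ++ mseq A B ((n + 4) / 2)
decreasing_by
  all_goals first
    | omega
    | exact lt_of_le_of_lt (aseq_le _) (by omega)
    | exact lt_of_le_of_lt (aStar_le _) (by omega)

/-!
For `n ≥ 1` the list `S(a(n))` occurs as a contiguous block of `S(n + 1)`: one step of the recursion
exhibits it as a prefix, unless `n` is a power of two, and then `S(a(n)) = B`, which is a suffix of
every `S(j)` with `j ≥ 1`. Hence `|S(a(m - 1))| ≤ |S(m)|`, so the halved sum in `R` is already at
least `|S(a(m - 1))|`, and the positive Stern number `L` makes the inequality strict.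
-/

theorem stern_pos {n : ℕ} (hn : 0 < n) : 0 < stern n := by
  fun_induction stern n with
  | case1 => exact absurd hn (lt_irrefl 0)
  | case2 => exact one_pos
  | case3 n _ ih => exact ih (by omega)
  | case4 n _ ih _ => exact Nat.add_pos_left (ih (by omega)) _

theorem aseq_pos {n : ℕ} (hn : 0 < n) : 0 < aseq n := by
  fun_induction aseq n with
  | case1 => exact absurd hn (lt_irrefl 0)
  | case2 => exact one_pos
  | case3 n _ ih => exact ih (by omega)
  | case4 n _ => exact Nat.succ_pos _

theorem aseq_two_mul (n : ℕ) : aseq (2 * n) = aseq n := by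
  rcases n with _ | n
  · rfl
  · rw [Nat.mul_succ, aseq, if_pos (by omega), show (2 * n + 2) / 2 = n + 1 by omega]

theorem aseq_two_mul_add_one (n : ℕ) : aseq (2 * n + 1) = n + 1 := by
  rcases n with _ | n
  · simp [aseq]
  · rw [show 2 * (n + 1) + 1 = (2 * n + 1) + 2 by ring, aseq, if_neg (by omega)]
    omega

theorem aseq_two_pow (k : ℕ) : aseq (2 ^ k) = 1 := by
  induction k with
  | zero => simp [aseq]
  | succ k ih => rw [pow_succ', aseq_two_mul, ih]

theorem aStar_of_not_two_pow {n : ℕ} (hn : ¬∃ k, n = 2 ^ k) : aStar n = aseq n :=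
  if_neg hn

section MarkovSequence

variable {α : Type*} (A B : List α)

theorem mseq_two_mul {j : ℕ} (hj : 2 ≤ j) :
    mseq A B (2 * j) = mseq A B j ++ mseq A B (aseq j) := by
  obtain ⟨n, hn⟩ : ∃ n, 2 * j = n + 3 := ⟨2 * j - 3, by omega⟩
  rw [hn, mseq, if_pos (by omega), show (n + 3) / 2 = j by omega]

theorem mseq_two_mul_add_one {j : ℕ} (hj : 1 ≤ j) :
    mseq A B (2 * j + 1) = mseq A B (aStar j) ++ mseq A B (j + 1) := by
  obtain ⟨n, hn⟩ : ∃ n, 2 * j + 1 = n + 3 := ⟨2 * j - 2, by omega⟩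
  rw [hn, mseq, if_neg (by omega), show (n + 4) / 2 = j + 1 by omega, Nat.add_sub_cancel]

theorem suffix_mseq {n : ℕ} (hn : 1 ≤ n) : B <:+ mseq A B n := by
  induction n using Nat.strong_induction_on with
  | _ n ih =>
    rcases Nat.even_or_odd' n with ⟨j, rfl | rfl⟩
    · obtain rfl | hj : j = 1 ∨ 2 ≤ j := by omega
      · simp [mseq]
      · have ha : aseq j < 2 * j := (aseq_le j).trans_lt (by omega)
        rw [mseq_two_mul A B hj]
        exact (ih _ ha (aseq_pos (by omega))).trans (List.suffix_append _ _)
    · obtain rfl | hj : j = 0 ∨ 1 ≤ j := by omega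
      · simp [mseq]
      · rw [mseq_two_mul_add_one A B hj]
        exact (ih (j + 1) (by omega) (by omega)).trans (List.suffix_append _ _)

theorem mseq_aseq_infix_mseq_succ {n : ℕ} (hn : 1 ≤ n) :
    mseq A B (aseq n) <:+: mseq A B (n + 1) := by
  by_cases hpow : ∃ k, n = 2 ^ k
  · obtain ⟨k, rfl⟩ := hpow
    rw [aseq_two_pow, mseq]
    exact (suffix_mseq A B (Nat.succ_pos _)).isInfix
  · rcases Nat.even_or_odd' n with ⟨j, rfl | rfl⟩
    · have hj : ¬∃ k, j = 2 ^ k := fun ⟨k, hk⟩ => hpow ⟨k + 1, by rw [hk, pow_succ']⟩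
      rw [aseq_two_mul, mseq_two_mul_add_one A B (by omega), aStar_of_not_two_pow hj]
      exact (List.prefix_append _ _).isInfix
    · have hj : j ≠ 0 := fun hj => hpow ⟨0, by simp [hj]⟩
      rw [aseq_two_mul_add_one, show 2 * j + 1 + 1 = 2 * (j + 1) by ring,
        mseq_two_mul A B (by omega)]
      exact (List.prefix_append _ _).isInfix

theorem length_mseq_aseq_pred_le {m : ℕ} (hm : 2 ≤ m) :
    (mseq A B (aseq (m - 1))).length ≤ (mseq A B m).length := by
  have hinfix := mseq_aseq_infix_mseq_succ A B (n := m - 1) (by omega)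
  rw [Nat.sub_add_cancel (by omega)] at hinfix
  exact hinfix.length_le

/-- Here `n`, `e` and `m` play the roles of `k / 2`, `i - 1` and `(q + 1) / 2` in `stmt14`. -/
theorem stmt14_general {n e m : ℕ} (hn : 0 < n) (he : 1 ≤ e) (hm : 2 ≤ m) :
    stern n + ((mseq A B (aseq (m - 1))).length + e * (mseq A B m).length) / 2 >
      (mseq A B (aseq (m - 1))).length := by
  have hstern : 0 < stern n := stern_pos hn
  have hlength : (mseq A B (aseq (m - 1))).length ≤ e * (mseq A B m).length :=
    (length_mseq_aseq_pred_le A B hm).trans (Nat.le_mul_of_pos_left _ he)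
  omega

end MarkovSequence

/-- for `A`, `B` of length 2, `i ≥ 2`, odd `q ≥ 3`, `k = 2^{i−1}·q`,
`m = (q+1)/2`, `L = d(k/2)` and `R = L + (|S(a(m−1))| + (i−1)·|S(m)|)/2`,
one has `R > |S(a(m−1))|`. -/
theorem stmt14 {α : Type*} (A B : List α) (hA : A.length = 2) (hB : B.length = 2)
    (i q : ℕ) (hi : 2 ≤ i) (hq : 3 ≤ q) (hodd : Odd q) :
    stern (2 ^ (i - 1) * q / 2) +
        ((mseq A B (aseq ((q + 1) / 2 - 1))).length +
            (i - 1) * (mseq A B ((q + 1) / 2)).length) / 2 >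
      (mseq A B (aseq ((q + 1) / 2 - 1))).length := by
  have hk : 0 < 2 ^ (i - 1) * q / 2 :=
    Nat.div_pos (le_mul_of_one_le_of_le Nat.one_le_two_pow (by omega)) two_pos
  exact stmt14_general A B hk (by omega) (by omega)
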